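/- Let F be a family of graphs on vertex set [n] (n ≥ 3) such that for all G, H in F the intersection G ∩ H is Hamiltonian. Then |F| ≤ 2^(C(n,2) - n), i.e., F contains at most a 1/2^n fraction of all graphs on [n]. -/

import Mathlib

open Finset in
lemma holder_aux {ι : Type*} (S : Finset ι) (k : ℕ) (hk : 0 < k) (hS : S.card = k)
    (a b : ι → ℝ) (ha : ∀ i, 0 ≤ a i) (hb : ∀ i, 0 ≤ b i) :
    ∏ i ∈ S, (a i) ^ ((k:ℝ)⁻¹) + ∏ i ∈ S, (b i) ^ ((k:ℝ)⁻¹) ≤ ∏ i ∈ S, (a i + b i) ^ ((k:ℝ)⁻¹) := by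
  have hk' : (k:ℝ) ≠ 0 := by positivity
  by_cases hz : ∃ i ∈ S, a i + b i = 0
  · obtain ⟨i, hi, h0⟩ := hz
    have h1 : a i = 0 := by linarith [ha i, hb i]
    have h2 : b i = 0 := by linarith [ha i, hb i]
    have e : (0:ℝ) ^ ((k:ℝ)⁻¹) = 0 := Real.zero_rpow (inv_ne_zero hk')
    rw [prod_eq_zero hi (by rw [h1, e]), prod_eq_zero hi (by rw [h2, e]),
      prod_eq_zero hi (by rw [h0, e])]
    simp
  · push Not at hz
    have hpos : ∀ i ∈ S, 0 < a i + b i := fun i hi =>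
      lt_of_le_of_ne (add_nonneg (ha i) (hb i)) (Ne.symm (hz i hi))
    have key : ∀ c : ι → ℝ, (∀ i, 0 ≤ c i) →
        ∏ i ∈ S, (c i) ^ ((k:ℝ)⁻¹) ≤
          (∑ i ∈ S, (k:ℝ)⁻¹ * (c i / (a i + b i))) * ∏ i ∈ S, (a i + b i) ^ ((k:ℝ)⁻¹) := by
      intro c hc
      have := Real.geom_mean_le_arith_mean_weighted S (fun _ => (k:ℝ)⁻¹)
        (fun i => c i / (a i + b i)) (fun i _ => by positivity)
        (by simp [hS, hk']) (fun i hi => div_nonneg (hc i) (hpos i hi).le)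
      have h2 : ∏ i ∈ S, (c i) ^ ((k:ℝ)⁻¹) =
          (∏ i ∈ S, (c i / (a i + b i)) ^ ((k:ℝ)⁻¹)) * ∏ i ∈ S, (a i + b i) ^ ((k:ℝ)⁻¹) := by
        rw [← prod_mul_distrib]
        refine prod_congr rfl fun i hi => ?_
        rw [← Real.mul_rpow (div_nonneg (hc i) (hpos i hi).le) (hpos i hi).le,
          div_mul_cancel₀ _ (hz i hi)]
      rw [h2]
      exact mul_le_mul_of_nonneg_right this
        (prod_nonneg fun i hi => Real.rpow_nonneg (hpos i hi).le _)
    have hs : (∑ i ∈ S, (k:ℝ)⁻¹ * (a i / (a i + b i))) +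
        (∑ i ∈ S, (k:ℝ)⁻¹ * (b i / (a i + b i))) = 1 := by
      rw [← sum_add_distrib]
      have : ∀ i ∈ S, (k:ℝ)⁻¹ * (a i / (a i + b i)) + (k:ℝ)⁻¹ * (b i / (a i + b i)) = (k:ℝ)⁻¹ := by
        intro i hi
        rw [← mul_add, ← add_div, div_self (hz i hi), mul_one]
      rw [sum_congr rfl this]
      simp [hS, hk']
    calc _ ≤ _ := add_le_add (key a ha) (key b hb)
      _ = _ := by rw [← add_mul, hs, one_mul]

lemma holder_pow {ι : Type*} (S : Finset ι) (k : ℕ) (hk : 0 < k) (hS : S.card = k)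
    (a b : ι → ℝ) (ha : ∀ i, 0 ≤ a i) (hb : ∀ i, 0 ≤ b i) (x y c : ℝ) (hx : 0 ≤ x) (hy : 0 ≤ y)
    (hc : 0 ≤ c) (h1 : x ^ k ≤ c * ∏ i ∈ S, a i) (h2 : y ^ k ≤ c * ∏ i ∈ S, b i) :
    (x + y) ^ k ≤ c * ∏ i ∈ S, (a i + b i) := by
  have root : ∀ (z : ℝ) (d : ι → ℝ), 0 ≤ z → (∀ i, 0 ≤ d i) → z ^ k ≤ c * ∏ i ∈ S, d i →
      z ≤ c ^ ((k:ℝ)⁻¹) * ∏ i ∈ S, (d i) ^ ((k:ℝ)⁻¹) := by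
    intro z d hz hd h
    have := Real.rpow_le_rpow (by positivity) h (z := (k:ℝ)⁻¹) (by positivity)
    rw [Real.pow_rpow_inv_natCast hz hk.ne', Real.mul_rpow hc (Finset.prod_nonneg fun i _ => hd i),
      ← Real.finsetProd_rpow _ _ (fun i _ => hd i)] at this
    exact this
  have hx' := root x a hx ha h1
  have hy' := root y b hy hb h2
  have hh := holder_aux S k hk hS a b ha hb
  have hc' : 0 ≤ c ^ ((k:ℝ)⁻¹) := Real.rpow_nonneg hc _
  have hab : ∀ i, 0 ≤ a i + b i := fun i => add_nonneg (ha i) (hb i)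
  have h3 : x + y ≤ c ^ ((k:ℝ)⁻¹) * ∏ i ∈ S, (a i + b i) ^ ((k:ℝ)⁻¹) := by
    nlinarith [mul_le_mul_of_nonneg_left hh hc']
  calc (x+y)^k ≤ (c ^ ((k:ℝ)⁻¹) * ∏ i ∈ S, (a i + b i) ^ ((k:ℝ)⁻¹)) ^ k :=
        pow_le_pow_left₀ (by positivity) h3 k
    _ = _ := by
      rw [mul_pow, Real.rpow_inv_natCast_pow hc hk.ne', ← Finset.prod_pow]
      congr 1
      exact Finset.prod_congr rfl fun i _ => Real.rpow_inv_natCast_pow (hab i) hk.ne'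

lemma holder_nat {ι : Type*} (S : Finset ι) (k : ℕ) (hk : 0 < k) (hS : S.card = k)
    (a b : ι → ℕ) (x y c : ℕ) (h1 : x ^ k ≤ c * ∏ i ∈ S, a i) (h2 : y ^ k ≤ c * ∏ i ∈ S, b i) :
    (x + y) ^ k ≤ c * ∏ i ∈ S, (a i + b i) := by
  have := holder_pow S k hk hS (fun i => (a i : ℝ))
    (fun i => (b i : ℝ)) (fun i => by positivity) (fun i => by positivity)
    (x : ℝ) (y : ℝ) (c : ℝ) (by positivity) (by positivity)
    (by positivity) (by exact_mod_cast h1) (by exact_mod_cast h2)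
  exact_mod_cast this

open Finset in
lemma shearer {α ι : Type*} [DecidableEq α] [Fintype ι] [DecidableEq ι] (T : ι → Finset α)
    (k : ℕ) (hk : 0 < k) (E : Finset α) :
    (∀ e ∈ E, (univ.filter fun i => e ∈ T i).card = k) →
    ∀ F : Finset (Finset α), (∀ A ∈ F, A ⊆ E) →
      F.card ^ k ≤ ∏ i, (F.image (· ∩ T i)).card := by
  induction E using Finset.induction_on with
  | empty =>
    intro _ F hF
    rcases F.eq_empty_or_nonempty with rfl | hne
    · simp [hk.ne']
    · have h1 : F ⊆ {∅} := fun A hA => by simpa using hF A hA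
      have h2 : F.card ≤ 1 := by simpa using card_le_card h1
      calc F.card ^ k ≤ 1 ^ k := Nat.pow_le_pow_left h2 k
        _ = ∏ _i : ι, 1 := by simp
        _ ≤ _ := prod_le_prod' fun i _ => card_pos.2 (hne.image _)
  | insert e E' he ih =>
    intro hcov F hF
    have ih' := ih fun x hx => hcov x (mem_insert_of_mem hx)
    set F0 := F.filter fun A => e ∉ A with hF0
    set F1 := (F.filter fun A => e ∈ A).image (fun A => A.erase e) with hF1
    have c1 : F1.card = (F.filter fun A => e ∈ A).card := by
      apply card_image_of_injOn
      intro A hA B hB hAB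
      simp only [coe_filter, Set.mem_ofPred_eq] at hA hB
      have : insert e (A.erase e) = insert e (B.erase e) := by
        simp only at hAB; rw [hAB]
      rwa [insert_erase hA.2, insert_erase hB.2] at this
    have hcard : F.card = F0.card + F1.card := by
      rw [c1, hF0, add_comm]; exact (card_filter_add_card_filter_not _).symm
    have i0 := ih' F0 (by
      intro A hA
      simp only [hF0, mem_filter] at hA
      exact (subset_insert_iff_of_notMem hA.2).1 (hF A hA.1))
    have i1 := ih' F1 (by
      intro A hA
      simp only [hF1, mem_image, mem_filter] at hA
      obtain ⟨B, hB, rfl⟩ := hA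
      exact subset_insert_iff.1 (hF B hB.1))
    set a : ι → ℕ := fun i => (F0.image (· ∩ T i)).card with ha
    set b : ι → ℕ := fun i => (F1.image (· ∩ T i)).card with hb
    set S := univ.filter fun i => e ∈ T i with hS
    set S' := univ.filter fun i => ¬ e ∈ T i with hS'
    set f : ι → ℕ := fun i => (F.image (· ∩ T i)).card with hf
    have f0 : ∀ i, a i ≤ f i := fun i => card_le_card (image_subset_image (filter_subset _ _))
    have f1 : ∀ i ∈ S', b i ≤ f i := by
      intro i hi
      have hi' : e ∉ T i := by simpa [hS'] using hi
      apply card_le_card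
      intro X hX
      simp only [hF1, mem_image, mem_filter] at hX ⊢
      obtain ⟨_, ⟨B, hB, rfl⟩, rfl⟩ := hX
      refine ⟨B, hB.1, ?_⟩
      ext x; simp only [mem_inter, mem_erase]
      grind
    have f2 : ∀ i ∈ S, a i + b i ≤ f i := by
      intro i hi
      have hi' : e ∈ T i := by simpa [hS] using hi
      have hinj : ((F1.image (· ∩ T i)).image (insert e)).card = b i := by
        apply card_image_of_injOn
        intro X hX Y hY hXY
        have nX : ∀ X ∈ (F1.image (· ∩ T i)), e ∉ X := by
          intro X hX
          simp only [hF1, mem_image, mem_filter] at hX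
          obtain ⟨_, ⟨B, hB, rfl⟩, rfl⟩ := hX
          simp
        have := congrArg (fun Z => Z.erase e) hXY
        simpa [erase_insert (nX X hX), erase_insert (nX Y hY)] using this
      rw [← hinj, ha]
      simp only
      rw [← card_union_of_disjoint]
      · apply card_le_card
        apply union_subset (image_subset_image (filter_subset _ _))
        intro X hX
        simp only [hF1, mem_image, mem_filter] at hX ⊢
        obtain ⟨_, ⟨_, ⟨B, hB, rfl⟩, rfl⟩, rfl⟩ := hX
        refine ⟨B, hB.1, ?_⟩
        ext x; simp only [mem_inter, mem_erase, mem_insert]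
        grind
      · rw [disjoint_left]
        intro X hX hX'
        simp only [hF0, mem_image, mem_filter] at hX hX'
        obtain ⟨A, hA, rfl⟩ := hX
        obtain ⟨Y, _, hY⟩ := hX'
        have : e ∈ A ∩ T i := by rw [← hY]; simp
        exact hA.2 (mem_inter.1 this).1
    have hsplit : ∀ g : ι → ℕ, ∏ i, g i = (∏ i ∈ S', g i) * ∏ i ∈ S, g i := by
      intro g
      rw [mul_comm]; exact (prod_filter_mul_prod_filter_not univ _ _).symm
    have j0 : F0.card ^ k ≤ (∏ i ∈ S', f i) * ∏ i ∈ S, a i := by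
      refine i0.trans ?_
      rw [hsplit]
      exact Nat.mul_le_mul_right _ (prod_le_prod' fun i _ => f0 i)
    have j1 : F1.card ^ k ≤ (∏ i ∈ S', f i) * ∏ i ∈ S, b i := by
      refine i1.trans ?_
      rw [hsplit]
      exact Nat.mul_le_mul_right _ (prod_le_prod' fun i hi => f1 i hi)
    have hfin : (F0.card + F1.card) ^ k ≤ (∏ i ∈ S', f i) * ∏ i ∈ S, (a i + b i) :=
      holder_nat S k hk (hcov e (mem_insert_self _ _)) a b _ _ _ j0 j1
    rw [hcard, hsplit]
    exact hfin.trans (Nat.mul_le_mul_left _ (prod_le_prod' f2))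

lemma ham_cross {n : ℕ} (hn : 3 ≤ n) (I : SimpleGraph (Fin n)) (hI : I.IsHamiltonian)
    (v : Fin n) (S : Set (Fin n)) (s t : Fin n) (hs : s ∈ S) (ht : t ∉ S) (hsv : s ≠ v)
    (htv : t ≠ v) : ∃ a ∈ S, ∃ b ∉ S, a ≠ v ∧ b ≠ v ∧ I.Adj a b := by
  have : Nontrivial (Fin n) := ⟨s, t, fun h => ht (h ▸ hs)⟩
  obtain ⟨p, hp⟩ := hI.exists_isHamiltonianCycle v
  have hq := hp.isHamiltonian_tail
  set q := p.tail with hqdef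
  have key : ∀ (S : Set (Fin n)) (t : Fin n), t ≠ v → p.snd ∈ S → t ∉ S →
      ∃ a ∈ S, ∃ b ∉ S, a ≠ v ∧ b ≠ v ∧ I.Adj a b := by
    intro S t htv h1 h2
    have hnot := SimpleGraph.Walk.endpoint_notMem_support_takeUntil hq.isPath
      (hq.mem_support t) (Ne.symm htv)
    obtain ⟨d, hd, hd1, hd2⟩ := (q.takeUntil t (hq.mem_support t)).exists_boundary_dart S h1 h2
    refine ⟨d.fst, hd1, d.snd, hd2, ?_, ?_, d.adj⟩
    · intro h
      have := SimpleGraph.Walk.dart_fst_mem_support_of_mem_darts _ hd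
      rw [h] at this
      exact hnot this
    · intro h
      have := SimpleGraph.Walk.dart_snd_mem_support_of_mem_darts _ hd
      rw [h] at this
      exact hnot this
  by_cases hx : p.snd ∈ S
  · exact key S t htv hx ht
  · obtain ⟨a, ha, b, hb, h1, h2, h3⟩ := key Sᶜ s hsv hx (fun h => h hs)
    exact ⟨b, not_not.1 hb, a, ha, h2, h1, h3.symm⟩

open Finset Classical in
lemma trace_bound {n : ℕ} (u v : Fin n) (huv : u ≠ v) (T : Finset (Sym2 (Fin n)))
    (hT : ∀ e, e ∈ T ↔ ¬ e.IsDiag ∧ v ∉ e)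
    (F : Finset (Finset (Sym2 (Fin n)))) (hF : ∀ A ∈ F, A ⊆ T)
    (h : ∀ A ∈ F, ∀ B ∈ F, ∀ S : Finset (Fin n), v ∉ S → u ∉ S → S.Nonempty →
      ∃ a ∈ S, ∃ b ∉ S, b ≠ v ∧ s(a, b) ∈ A ∧ s(a, b) ∈ B) :
    F.card * 2 ^ (n - 2) ≤ 2 ^ T.card := by
  set P := ((univ.erase v).erase u : Finset (Fin n)).powerset with hP
  have hPc : P.card = 2 ^ (n - 2) := by
    rw [hP, card_powerset, card_erase_of_mem (by simp [huv]), card_erase_of_mem (by simp)]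
    simp [Nat.sub_sub]
  let cut : Finset (Fin n) → Finset (Sym2 (Fin n)) := fun S =>
    T.filter fun e => ∃ a ∈ S, ∃ b ∉ S, e = s(a, b)
  have hcut : ∀ S a b, s(a, b) ∈ T → (s(a, b) ∈ cut S ↔ ¬ (a ∈ S ↔ b ∈ S)) := by
    intro S a b hab
    simp only [cut, mem_filter, hab, true_and, Sym2.eq_iff]
    constructor
    · rintro ⟨x, hx, y, hy, ⟨rfl, rfl⟩ | ⟨rfl, rfl⟩⟩ <;> tauto
    · intro hh
      by_cases ha : a ∈ S
      · exact ⟨a, ha, b, by tauto, Or.inl ⟨rfl, rfl⟩⟩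
      · exact ⟨b, by tauto, a, ha, Or.inr ⟨rfl, rfl⟩⟩
  have hmain : (F ×ˢ P).card ≤ T.powerset.card := by
    apply card_le_card_of_injOn (fun q => symmDiff q.1 (cut q.2))
    · rintro ⟨A, S⟩ hq
      simp only [coe_product, Set.mem_prod, mem_coe] at hq
      simp only [mem_coe, mem_powerset]
      intro e he
      rw [mem_symmDiff] at he
      rcases he with he | he
      · exact hF A hq.1 he.1
      · exact (mem_filter.1 he.1).1
    · rintro ⟨A, S⟩ hq ⟨B, R⟩ hr heq
      simp only [coe_product, Set.mem_prod, mem_coe, hP, mem_powerset] at hq hr heq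
      have hSR : S = R := by
        by_contra hne
        have hne' : (symmDiff S R).Nonempty := by
          rw [nonempty_iff_ne_empty]
          intro h0
          exact hne (symmDiff_eq_bot.1 h0)
        obtain ⟨a, ha, b, hb, hbv, hA, hB⟩ := h A hq.1 B hr.1 (symmDiff S R)
          (by
            intro hv
            rcases mem_symmDiff.1 hv with hv | hv
            · simpa using hq.2 hv.1
            · simpa using hr.2 hv.1)
          (by
            intro hv
            rcases mem_symmDiff.1 hv with hv | hv
            · simpa using hq.2 hv.1
            · simpa using hr.2 hv.1) hne'
        have hTab := hF A hq.1 hA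
        have h1 := hcut S a b hTab
        have h2 := hcut R a b hTab
        have h3 : s(a, b) ∈ symmDiff A (cut S) ↔ s(a, b) ∈ symmDiff B (cut R) := by rw [heq]
        rw [mem_symmDiff, mem_symmDiff] at h3
        rw [mem_symmDiff] at ha hb
        simp only [hA, hB, true_and, not_true, and_false, or_false, h1, h2, not_not] at h3
        clear h1 h2 hA hB hTab heq hcut h hF hT hq hr
        by_cases b1 : a ∈ S <;> by_cases b2 : a ∈ R <;> by_cases b3 : b ∈ S <;>
          by_cases b4 : b ∈ R <;> simp [b1, b2, b3, b4] at ha hb h3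
      subst hSR
      have := symmDiff_left_injective (cut S) heq
      simp [this]
  rwa [card_product, hPc, card_powerset] at hmain

open Finset in
/-- A Hamiltonian-intersecting family of graphs on `[n]`, `n ≥ 3`, has size at most
`2 ^ (C(n,2) - n)`. -/
theorem stmt_15 (n : ℕ) (hn : 3 ≤ n) (F : Set (SimpleGraph (Fin n)))
    (h : ∀ G ∈ F, ∀ H ∈ F, (G ⊓ H).IsHamiltonian) :
    F.ncard ≤ 2 ^ (n.choose 2 - n) := by
  classical
  set E : Finset (Sym2 (Fin n)) := univ.filter fun e => ¬ e.IsDiag with hE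
  have hEc : E.card = n.choose 2 := by
    have := Sym2.card_subtype_not_diag (α := Fin n)
    rw [Fintype.card_subtype] at this
    simpa [hE] using this
  set T : Fin n → Finset (Sym2 (Fin n)) := fun v => univ.filter fun e => ¬ e.IsDiag ∧ v ∉ e with hTd
  have hT : ∀ v e, e ∈ T v ↔ ¬ e.IsDiag ∧ v ∉ e := by intro v e; simp [hTd]
  set FF : Finset (Finset (Sym2 (Fin n))) := F.toFinset.image (fun G => G.edgeFinset) with hFF
  have hcard : FF.card = F.ncard := by
    rw [hFF, card_image_of_injective _ (fun G H hGH => by simpa using hGH),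
      Set.ncard_eq_toFinset_card']
  have hcov : ∀ e ∈ E, (univ.filter fun v => e ∈ T v).card = n - 2 := by
    intro e he
    induction e with | h a b
    have hab : a ≠ b := by simpa [hE] using he
    have : (univ.filter fun v => s(a, b) ∈ T v) = (univ.erase a).erase b := by
      ext v
      simp [hT, hab]
      tauto
    rw [this, card_erase_of_mem (by simp [hab.symm]), card_erase_of_mem (by simp)]
    simp [Nat.sub_sub]
  have hsh := shearer T (n - 2) (by omega) E hcov FF (by
    intro A hA
    simp only [hFF, mem_image, Set.mem_toFinset] at hA
    obtain ⟨G, _, rfl⟩ := hA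
    intro e he
    simp only [hE, mem_filter, mem_univ, true_and]
    exact G.not_isDiag_of_mem_edgeFinset he)
  have htr : ∀ v, (FF.image (· ∩ T v)).card * 2 ^ (n - 2) ≤ 2 ^ (T v).card := by
    intro v
    have : Nontrivial (Fin n) := Fin.nontrivial_iff_two_le.2 (by omega)
    obtain ⟨u, huv⟩ := exists_ne v
    refine trace_bound u v huv (T v) (hT v) _ ?_ ?_
    · intro A hA
      obtain ⟨B, _, rfl⟩ := mem_image.1 hA
      exact inter_subset_right
    · intro A hA B hB S hvS huS ⟨x, hx⟩
      simp only [hFF, mem_image, Set.mem_toFinset] at hA hB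
      obtain ⟨_, ⟨G, hG, rfl⟩, rfl⟩ := hA
      obtain ⟨_, ⟨H, hH, rfl⟩, rfl⟩ := hB
      obtain ⟨a, ha, b, hb, hav, hbv, hab⟩ := ham_cross hn (G ⊓ H) (h G hG H hH) v (S : Set (Fin n))
        x u hx huS (fun hh => hvS (hh ▸ hx)) huv
      have hTab : s(a, b) ∈ T v := by
        rw [hT]
        simp [hab.ne, hav.symm, hbv.symm]
      have hab' := (SimpleGraph.inf_adj _ _ _ _).1 hab
      exact ⟨a, ha, b, hb, hbv, by simp [hTab, hab'.1], by simp [hTab, hab'.2]⟩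
  have hsum : ∑ v, (T v).card = (n - 2) * E.card := by
    have e1 : ∀ v, (T v).card = ∑ e ∈ E, if e ∈ T v then 1 else 0 := by
      intro v
      rw [← card_filter]
      congr 1
      ext e
      simp [hT, hE]
    rw [sum_congr rfl fun v _ => e1 v, sum_comm,
      sum_congr rfl fun e he => (card_filter _ _).symm.trans (hcov e he)]
    simp [mul_comm]
  have hfin : (FF.card * 2 ^ n) ^ (n - 2) ≤ (2 ^ E.card) ^ (n - 2) := by
    calc (FF.card * 2 ^ n) ^ (n - 2) = FF.card ^ (n - 2) * ∏ _v : Fin n, 2 ^ (n - 2) := by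
          rw [mul_pow]; simp [← pow_mul, mul_comm]
      _ ≤ (∏ v, (FF.image (· ∩ T v)).card) * ∏ _v : Fin n, 2 ^ (n - 2) :=
          Nat.mul_le_mul_right _ hsh
      _ = ∏ v, ((FF.image (· ∩ T v)).card * 2 ^ (n - 2)) := prod_mul_distrib.symm
      _ ≤ ∏ v, 2 ^ (T v).card := prod_le_prod' fun v _ => htr v
      _ = (2 ^ E.card) ^ (n - 2) := by
          rw [prod_pow_eq_pow_sum, hsum, ← pow_mul, mul_comm]
  have hle := (Nat.pow_le_pow_iff_left (by omega : n - 2 ≠ 0)).1 hfin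
  rw [hcard, hEc] at hle
  have hnc : n ≤ n.choose 2 := by
    rw [Nat.choose_two_right, Nat.le_div_iff_mul_le (by norm_num)]
    exact Nat.mul_le_mul_left _ (by omega)
  rw [← Nat.sub_add_cancel hnc, pow_add] at hle
  exact Nat.le_of_mul_le_mul_right hle (by positivity)
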